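/- arXiv:1210.1597 — 2 statements merged into one kernel-verified Lean document; each statement's English description precedes it below -/
import Mathlib

section
/- With notation as in the preceding, for any nonempty finite subset Φ ⊆ {1,…,n} and all a, b in a Hopf algebra H: δ_Φ(ab − ba) = Σ over pairs (Λ, Y) with Λ∪Y = Φ and Λ∩Y ≠ ∅ of (δ_Λ(a)·δ_Y(b) − δ_Y(b)·δ_Λ(a)). -/
/- STATEMENT 8: commutator formula for the inclusion–exclusion maps `δ_Φ` in a Hopf algebra:
   for nonempty `Φ`, `δ_Φ(ab − ba) = Σ_{Λ∪Y=Φ, Λ∩Y≠∅} (δ_Λ(a)δ_Y(b) − δ_Y(b)δ_Λ(a))`. -/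

open scoped TensorProduct
open PiTensorProduct

namespace GQDP

variable (R : Type*) [CommRing R] (H : Type*) [Ring H] [HopfAlgebra R H]

/-- The `n`-fold tensor power `H^{⊗n}`. -/
abbrev TP (n : ℕ) := ⨂[R] (_ : Fin n), H

/-- The canonical map `H ⊗ H^{⊗n} → H^{⊗(n+1)}`. -/
noncomputable def step (n : ℕ) : (H ⊗[R] TP R H n) →ₗ[R] TP R H (n + 1) :=
  ((PiTensorProduct.reindex R (fun _ : Fin 1 ⊕ Fin n => H)
      (finSumFinEquiv.trans (finCongr (Nat.add_comm 1 n)))).toLinearMap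
    ∘ₗ (PiTensorProduct.tmulEquiv (ι := Fin 1) (ι₂ := Fin n) R H).toLinearMap)
    ∘ₗ (LinearMap.rTensor (TP R H n)
      (PiTensorProduct.subsingletonEquiv (0 : Fin 1) : (⨂[R] (_ : Fin 1), H) ≃ₗ[R] H).symm.toLinearMap)

/-- The iterated coproduct `Δⁿ : H → H^{⊗n}`, with `Δ⁰ := ε` and
    `Δ^{n+1} := (id ⊗ Δⁿ) ∘ Δ`. -/
noncomputable def DeltaIter : (n : ℕ) → H →ₗ[R] TP R H n
  | 0 => (PiTensorProduct.isEmptyEquiv (ι := Fin 0)).symm.toLinearMap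
          ∘ₗ (Coalgebra.counit : H →ₗ[R] R)
  | n + 1 => step R H n ∘ₗ LinearMap.lTensor H (DeltaIter n)
              ∘ₗ (Coalgebra.comul : H →ₗ[R] H ⊗[R] H)

/-- The partial iterated coproduct `Δ_Σ = j_Σ ∘ Δ^{|Σ|}`, realized as the full iterated
    coproduct `Δⁿ` followed by applying `η ∘ ε` in every tensor position outside `Σ`
    (and the identity in the positions of `Σ`). -/
noncomputable def DeltaSub (n : ℕ) (S : Finset (Fin n)) : H →ₗ[R] TP R H n :=
  (PiTensorProduct.map fun i =>
      if i ∈ S then (LinearMap.id : H →ₗ[R] H)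
      else Algebra.linearMap R H ∘ₗ (Coalgebra.counit : H →ₗ[R] R))
    ∘ₗ DeltaIter R H n

/-- `δ_Φ := Σ_{Σ'⊆Φ} (−1)^{|Φ|−|Σ'|} Δ_{Σ'}` (in particular `δ_∅ = Δ_∅ = ε`). -/
noncomputable def deltaF (n : ℕ) (Φ : Finset (Fin n)) : H →ₗ[R] TP R H n :=
  ∑ S ∈ Φ.powerset, ((-1 : ℤ) ^ (Φ.card - S.card)) • DeltaSub R H n S

/-!
Each `Δ_Σ` is multiplicative, and `Δ_Σ(a)` commutes with `Δ_T(b)` when `Σ` and `T` are disjoint,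
since in every tensor position one of the two is a scalar. The rest is Möbius inversion on finite
subsets: `Δ_Σ = ∑_{Λ ⊆ Σ} δ_Λ` turns multiplicativity of `Δ` into
`δ_Φ(ab) = ∑_{Λ ∪ Y = Φ} δ_Λ(a) δ_Y(b)`, and in the commutator the terms with `Λ ∩ Y = ∅` cancel
because `δ_Λ(a)` and `δ_Y(b)` then commute.
-/

section InclusionExclusion

open Finset

variable {ι M A : Type*}

theorem eq_of_sum_powerset_eq [AddCancelCommMonoid M] {u v : Finset ι → M}
    (h : ∀ S : Finset ι, ∑ L ∈ S.powerset, u L = ∑ L ∈ S.powerset, v L) (S : Finset ι) :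
    u S = v S := by
  classical
  induction S using Finset.strongInduction with
  | H S ih =>
    have proper_sums_eq : ∑ L ∈ S.powerset.erase S, u L = ∑ L ∈ S.powerset.erase S, v L := by
      refine sum_congr rfl fun L hL => ih L ?_
      obtain ⟨hne, hsub⟩ := mem_erase.1 hL
      exact (mem_powerset.1 hsub).ssubset_of_ne hne
    have hS := h S
    rw [← add_sum_erase _ u (mem_powerset_self S), ← add_sum_erase _ v (mem_powerset_self S),
      proper_sums_eq] at hS
    exact add_right_cancel hS

/-- The inclusion–exclusion (Möbius) transform on finite subsets, through which `δ_Φ` is obtained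
from the maps `Δ_Σ`. The exponent is a natural-number subtraction, exact because `T ⊆ S`. -/
def inclExcl [AddCommGroup M] (f : Finset ι → M) (S : Finset ι) : M :=
  ∑ T ∈ S.powerset, ((-1 : ℤ) ^ (#S - #T)) • f T

theorem inclExcl_insert [DecidableEq ι] [AddCommGroup M] (f : Finset ι → M) {S : Finset ι} {i : ι}
    (hi : i ∉ S) :
    inclExcl f (insert i S) = inclExcl (fun T => f (insert i T)) S - inclExcl f S := by
  rw [inclExcl, sum_powerset_insert hi, sub_eq_neg_add, inclExcl, inclExcl, ← sum_neg_distrib]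
  congr 1 <;> refine sum_congr rfl fun T hT => ?_
  · have hcard : #T ≤ #S := card_le_card (mem_powerset.1 hT)
    rw [card_insert_of_notMem hi, Nat.sub_add_comm hcard, pow_succ, mul_neg_one, neg_smul]
  · have hiT : i ∉ T := fun h => hi (mem_powerset.1 hT h)
    rw [card_insert_of_notMem hi, card_insert_of_notMem hiT, Nat.add_sub_add_right]

theorem sum_powerset_inclExcl [AddCommGroup M] (f : Finset ι → M) (S : Finset ι) :
    ∑ L ∈ S.powerset, inclExcl f L = f S := by
  classical
  induction S using Finset.induction_on generalizing f with
  | empty => simp [inclExcl]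
  | insert i S hi ih =>
    have inclExcl_insert_of_subset : ∀ L ∈ S.powerset,
        inclExcl f (insert i L) = inclExcl (fun T => f (insert i T)) L - inclExcl f L :=
      fun L hL => inclExcl_insert f fun h => hi (mem_powerset.1 hL h)
    rw [sum_powerset_insert hi, sum_congr rfl inclExcl_insert_of_subset, sum_sub_distrib,
      add_sub_cancel, ih]

theorem inclExcl_sub [AddCommGroup M] (f g : Finset ι → M) (S : Finset ι) :
    inclExcl (f - g) S = inclExcl f S - inclExcl g S := by
  simp only [inclExcl, Pi.sub_apply, smul_sub, sum_sub_distrib]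

theorem commute_inclExcl [NonUnitalNonAssocRing A] {f g : Finset ι → A}
    (hcomm : ∀ S T, Disjoint S T → Commute (f S) (g T)) {S T : Finset ι} (hST : Disjoint S T) :
    Commute (inclExcl f S) (inclExcl g T) :=
  Commute.sum_left _ _ _ fun U hU => Commute.sum_right _ _ _ fun V hV =>
    ((hcomm U V (hST.mono (mem_powerset.1 hU) (mem_powerset.1 hV))).smul_right _).smul_left _

variable [DecidableEq ι]

/-- The pairs `(Λ, Y)` with `Λ ∪ Y = Φ`, which index the inclusion–exclusion transform of a
product. They are cut out of `Φ.powerset ×ˢ Φ.powerset` only to form a `Finset`. -/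
def coverPairs (Φ : Finset ι) : Finset (Finset ι × Finset ι) :=
  {p ∈ Φ.powerset ×ˢ Φ.powerset | p.1 ∪ p.2 = Φ}

theorem mem_coverPairs {Φ : Finset ι} {p : Finset ι × Finset ι} :
    p ∈ coverPairs Φ ↔ p.1 ∪ p.2 = Φ := by
  simp only [coverPairs, mem_filter, mem_product, mem_powerset, and_iff_right_iff_imp]
  rintro rfl
  exact ⟨subset_union_left, subset_union_right⟩

theorem sum_coverPairs_swap [AddCommMonoid M] (F : Finset ι × Finset ι → M) (Φ : Finset ι) :
    ∑ p ∈ coverPairs Φ, F p.swap = ∑ p ∈ coverPairs Φ, F p :=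
  sum_equiv (Equiv.prodComm _ _) (by simp [mem_coverPairs, union_comm]) fun _ _ => rfl

theorem sum_powerset_sum_coverPairs [AddCommMonoid M] (F : Finset ι × Finset ι → M)
    (S : Finset ι) :
    ∑ Φ ∈ S.powerset, ∑ p ∈ coverPairs Φ, F p = ∑ p ∈ S.powerset ×ˢ S.powerset, F p := by
  have union_mem : ∀ p ∈ S.powerset ×ˢ S.powerset, p.1 ∪ p.2 ∈ S.powerset := by
    simp only [mem_product, mem_powerset]
    exact fun p hp => union_subset hp.1 hp.2
  rw [← sum_fiberwise_of_maps_to union_mem]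
  refine sum_congr rfl fun Φ hΦ => sum_congr ?_ fun _ _ => rfl
  ext p
  simp only [mem_coverPairs, mem_filter, mem_product, mem_powerset, iff_and_self]
  rintro rfl
  exact union_subset_iff.1 (mem_powerset.1 hΦ)

theorem inclExcl_mul [NonUnitalNonAssocRing A] (f g : Finset ι → A) (Φ : Finset ι) :
    inclExcl (f * g) Φ = ∑ p ∈ coverPairs Φ, inclExcl f p.1 * inclExcl g p.2 := by
  revert Φ
  refine eq_of_sum_powerset_eq fun S => ?_
  calc ∑ L ∈ S.powerset, inclExcl (f * g) L
      = (∑ Λ ∈ S.powerset, inclExcl f Λ) * ∑ Y ∈ S.powerset, inclExcl g Y := by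
        simp only [sum_powerset_inclExcl, Pi.mul_apply]
    _ = ∑ p ∈ S.powerset ×ˢ S.powerset, inclExcl f p.1 * inclExcl g p.2 := by
        rw [sum_mul_sum, sum_product]
    _ = ∑ L ∈ S.powerset, ∑ p ∈ coverPairs L, inclExcl f p.1 * inclExcl g p.2 :=
        (sum_powerset_sum_coverPairs _ S).symm

theorem inclExcl_commutator [NonUnitalNonAssocRing A] {f g : Finset ι → A}
    (hcomm : ∀ S T, Disjoint S T → Commute (f S) (g T)) (Φ : Finset ι) :
    inclExcl (f * g - g * f) Φ =
      ∑ p ∈ coverPairs Φ with (p.1 ∩ p.2).Nonempty,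
        (inclExcl f p.1 * inclExcl g p.2 - inclExcl g p.2 * inclExcl f p.1) := by
  have inclExcl_mul_swap : inclExcl (g * f) Φ =
      ∑ p ∈ coverPairs Φ, inclExcl g p.2 * inclExcl f p.1 := by
    rw [inclExcl_mul, ← sum_coverPairs_swap]
    rfl
  rw [inclExcl_sub, inclExcl_mul, inclExcl_mul_swap, ← sum_sub_distrib]
  refine (sum_filter_of_ne fun p _ hne => ?_).symm
  contrapose! hne
  exact sub_eq_zero.2 (commute_inclExcl hcomm (disjoint_iff_inter_eq_empty.2 hne))

end InclusionExclusion

section PiTensorMap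

variable {ι 𝕜 : Type*} [CommSemiring 𝕜] {A B C : ι → Type*}

theorem piTensorMap_mul [∀ i, Semiring (A i)] [∀ i, Algebra 𝕜 (A i)] [∀ i, Semiring (B i)]
    [∀ i, Algebra 𝕜 (B i)] {f : ∀ i, A i →ₗ[𝕜] B i}
    (hf : ∀ i x y, f i (x * y) = f i x * f i y) (s t : ⨂[𝕜] i, A i) :
    PiTensorProduct.map f (s * t) = PiTensorProduct.map f s * PiTensorProduct.map f t := by
  revert s t
  rw [LinearMap.map_mul_iff]
  ext x y
  simp [hf, Pi.mul_def]

theorem commute_piTensorMap [∀ i, AddCommMonoid (A i)] [∀ i, Module 𝕜 (A i)]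
    [∀ i, AddCommMonoid (B i)] [∀ i, Module 𝕜 (B i)] [∀ i, Semiring (C i)]
    [∀ i, Algebra 𝕜 (C i)] {f : ∀ i, A i →ₗ[𝕜] C i} {g : ∀ i, B i →ₗ[𝕜] C i}
    (hfg : ∀ i x y, Commute (f i x) (g i y)) (s : ⨂[𝕜] i, A i) (t : ⨂[𝕜] i, B i) :
    Commute (PiTensorProduct.map f s) (PiTensorProduct.map g t) := by
  induction s using PiTensorProduct.induction_on with
  | add s s' hs hs' => simpa only [map_add] using hs.add_left hs'
  | smul_tprod r x =>
    induction t using PiTensorProduct.induction_on with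
    | add t t' ht ht' => simpa only [map_add] using ht.add_right ht'
    | smul_tprod r' y =>
      simp only [map_smul, PiTensorProduct.map_tprod]
      exact ((Commute.tprod (funext fun i => hfg i _ _)).smul_right _).smul_left _

end PiTensorMap

section IteratedCoproduct

variable {R H}

theorem step_tmul_tprod {n : ℕ} (x : H) (y : Fin n → H) :
    step R H n (x ⊗ₜ tprod R y) = tprod R (Fin.cons x y : Fin (n + 1) → H) := by
  simp only [step, LinearMap.comp_apply, LinearMap.rTensor_tmul, LinearEquiv.coe_coe,
    PiTensorProduct.subsingletonEquiv_symm_apply', PiTensorProduct.tmulEquiv_apply,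
    PiTensorProduct.reindex_tprod]
  congr 1
  funext i
  obtain ⟨j, rfl⟩ := (finSumFinEquiv.trans (finCongr (Nat.add_comm 1 n))).surjective i
  rw [Equiv.symm_apply_apply]
  rcases j with j | j
  · obtain rfl := Subsingleton.elim j 0
    rfl
  · simp

theorem step_mul {n : ℕ} (x y : H ⊗[R] TP R H n) :
    step R H n (x * y) = step R H n x * step R H n y := by
  revert x y
  rw [LinearMap.map_mul_iff]
  ext x s y t
  have cons_mul_cons : (Fin.cons (x * y) (s * t) : Fin (n + 1) → H) =
      Fin.cons x s * Fin.cons y t := by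
    funext i
    cases i using Fin.cases <;> simp
  simp [step_tmul_tprod, cons_mul_cons]

theorem deltaIter_mul (n : ℕ) (a b : H) :
    DeltaIter R H n (a * b) = DeltaIter R H n a * DeltaIter R H n b := by
  induction n generalizing a b with
  | zero =>
    simp only [DeltaIter, LinearMap.comp_apply, Bialgebra.counit_mul, LinearEquiv.coe_coe,
      PiTensorProduct.isEmptyEquiv_symm_apply, smul_tprod_mul_smul_tprod]
    congr 2
    exact Subsingleton.elim _ _
  | succ n ih =>
    have lTensor_mul : ∀ x y : H ⊗[R] H, LinearMap.lTensor H (DeltaIter R H n) (x * y) =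
        LinearMap.lTensor H (DeltaIter R H n) x * LinearMap.lTensor H (DeltaIter R H n) y :=
      LinearMap.map_mul_of_map_mul_tmul fun x y s t => by
        simp only [LinearMap.lTensor_tmul, ih, Algebra.TensorProduct.tmul_mul_tmul]
    simp only [DeltaIter, LinearMap.comp_apply, Bialgebra.comul_mul, lTensor_mul, step_mul]

theorem deltaSub_mul {n : ℕ} (S : Finset (Fin n)) (a b : H) :
    DeltaSub R H n S (a * b) = DeltaSub R H n S a * DeltaSub R H n S b := by
  simp only [DeltaSub, LinearMap.comp_apply, deltaIter_mul]
  refine piTensorMap_mul (fun i x y => ?_) _ _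
  split_ifs <;> simp

theorem commute_deltaSub {n : ℕ} {S T : Finset (Fin n)} (hST : Disjoint S T) (a b : H) :
    Commute (DeltaSub R H n S a) (DeltaSub R H n T b) := by
  refine commute_piTensorMap (fun i x y => ?_) _ _
  by_cases hS : i ∈ S
  · rw [if_neg (Finset.disjoint_left.1 hST hS)]
    exact Algebra.commute_algebraMap_right _ _
  · rw [if_neg hS]
    exact Algebra.commute_algebraMap_left _ _

theorem deltaF_apply_eq_inclExcl {n : ℕ} (Φ : Finset (Fin n)) (a : H) :
    deltaF R H n Φ a = inclExcl (fun S => DeltaSub R H n S a) Φ := by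
  simp only [deltaF, inclExcl, LinearMap.sum_apply]
  rfl

end IteratedCoproduct

/-- For every nonempty finite `Φ ⊆ {1,…,n}` and all `a, b ∈ H`:
    `δ_Φ(ab − ba) = Σ_{Λ∪Y=Φ, Λ∩Y≠∅} (δ_Λ(a)·δ_Y(b) − δ_Y(b)·δ_Λ(a))`. -/
theorem deltaF_commutator (a b : H) (n : ℕ) (Φ : Finset (Fin n)) (hΦ : Φ.Nonempty) :
    deltaF R H n Φ (a * b - b * a) =
      ∑ p ∈ (Φ.powerset ×ˢ Φ.powerset).filter
          (fun p => p.1 ∪ p.2 = Φ ∧ (p.1 ∩ p.2).Nonempty),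
        (deltaF R H n p.1 a * deltaF R H n p.2 b -
          deltaF R H n p.2 b * deltaF R H n p.1 a) := by
  have deltaSub_commutator : (fun S => DeltaSub R H n S (a * b - b * a)) =
      (fun S => DeltaSub R H n S a) * (fun S => DeltaSub R H n S b) -
        (fun S => DeltaSub R H n S b) * fun S => DeltaSub R H n S a := by
    funext S
    simp only [map_sub, deltaSub_mul, Pi.sub_apply, Pi.mul_apply]
  simp only [deltaF_apply_eq_inclExcl, deltaSub_commutator]
  rw [inclExcl_commutator fun S T hST => commute_deltaSub hST a b, coverPairs,
    Finset.filter_filter]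

end GQDP
end

section
/- Let H be a torsion-free Hopf algebra over C[q,q⁻¹], I_q ⊆ H a left ideal and two-sided coideal, and I_q^∨ := Σ_{n≥1}(q−1)^{−n}J^{n−1}I_q ⊆ H^∨. Define (I_q^∨)^! := { x ∈ I_q^∨ | δ_n(x) ∈ (q−1)ⁿ Σ_{s=1}^n (H^∨)^{⊗(s−1)} ⊗ I_q^∨ ⊗ (H^∨)^{⊗(n−s)} for all n ≥ 1 }. Then I_q ⊆ (I_q^∨)^!. -/
set_option synthInstance.maxHeartbeats 1000000
set_option maxHeartbeats 1000000

/- STATEMENT 16: reciprocity, first inclusion. For a left ideal and two-sided coideal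
   I_q of a torsion-free Hopf algebra H over ℂ[q,q⁻¹] (an integral form of a ℂ(q)-Hopf
   algebra A), with I_q^∨ ⊆ H^∨ and
   (I_q^∨)^! := { x ∈ I_q^∨ | δ_n(x) ∈ (q−1)ⁿ Σ_s (H^∨)^{⊗(s−1)}⊗I_q^∨⊗(H^∨)^{⊗(n−s)} ∀n≥1 },
   one has I_q ⊆ (I_q^∨)^!. -/

open scoped TensorProduct
open PiTensorProduct

namespace GQDP

/-- The ground ring `ℂ[q,q⁻¹]` of complex Laurent polynomials. -/
abbrev R : Type := LaurentPolynomial ℂ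

/-- The field `ℂ(q)` of rational functions, realized as the fraction field of `ℂ[q,q⁻¹]`. -/
abbrev K : Type := FractionRing R

/-- The indeterminate `q`, as an element of `ℂ[q,q⁻¹]`. -/
noncomputable def q : R := LaurentPolynomial.T 1

/-- The indeterminate `q`, as an element of `ℂ(q)`. -/
noncomputable def qK : K := algebraMap R K q

/- `A` is a Hopf algebra over `ℂ(q)` (playing the role of `H ⊗_{ℂ[q,q⁻¹]} ℂ(q)`), in which
   all the `ℂ[q,q⁻¹]`-integral forms below live as `R`-submodules. -/
variable (A : Type*) [Ring A] [HopfAlgebra K A] [Algebra R A] [IsScalarTower R K A]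

/-- Scaling of an `R`-submodule of `A` by a scalar `c ∈ ℂ(q)`. -/
noncomputable def ksmul (c : K) (p : Submodule R A) : Submodule R A :=
  Submodule.span R ((fun a => c • a) '' (p : Set A))

/-- The "tensor product" of two `R`-submodules of `A` inside `A ⊗[ℂ(q)] A`: the additive
    subgroup generated by the corresponding pure tensors (this is also their `R`-span). -/
noncomputable def tsubK (P Q : Submodule R A) : AddSubgroup (A ⊗[K] A) :=
  AddSubgroup.closure {z | ∃ p ∈ P, ∃ r ∈ Q, z = p ⊗ₜ[K] r}

/-- The augmentation ideal `J := H ∩ ker ε` of an integral form `H ⊆ A`. -/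
noncomputable def Jform (H : Submodule R A) : Submodule R A :=
  H ⊓ (LinearMap.ker (Coalgebra.counit : A →ₗ[K] K)).restrictScalars R

/-- Drinfeld's algebra `H^∨ := Σ_{n≥0} (q−1)^{−n} Jⁿ`. -/
noncomputable def Hvee (H : Submodule R A) : Submodule R A :=
  ⨆ n : ℕ, ksmul A (((qK - 1)⁻¹) ^ n) ((Jform A H) ^ n)

/-- `H` is a Hopf-algebra integral form of `A` over `ℂ[q,q⁻¹]`: a unital `R`-subalgebra,
    with `Δ(H) ⊆ H ⊗ H`, `ε(H) ⊆ ℂ[q,q⁻¹]` and `S(H) ⊆ H`. -/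
structure IsHopfForm (H : Submodule R A) : Prop where
  one_mem : (1 : A) ∈ H
  mul_mem : ∀ x ∈ H, ∀ y ∈ H, x * y ∈ H
  comul_mem : ∀ x ∈ H, Coalgebra.comul (R := K) x ∈ tsubK A H H
  counit_mem : ∀ x ∈ H, ∃ r : R, Coalgebra.counit (R := K) x = algebraMap R K r
  antipode_mem : ∀ x ∈ H, HopfAlgebra.antipode (R := K) x ∈ H

/-- The `n`-fold tensor power `A^{⊗n}` over `ℂ(q)`. -/
abbrev TPK (n : ℕ) := ⨂[K] (_ : Fin n), A

/-- The "tensor product" of a family of `R`-submodules `p i ⊆ A` inside `A^{⊗n}`: the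
    additive subgroup generated by the pure tensors with `i`-th entry in `p i`. -/
noncomputable def tgrpK {n : ℕ} (p : Fin n → Submodule R A) : AddSubgroup (TPK A n) :=
  AddSubgroup.closure {z | ∃ f : Fin n → A, (∀ i, f i ∈ p i) ∧ z = PiTensorProduct.tprod K f}

/-- The canonical map `A ⊗ A^{⊗n} → A^{⊗(n+1)}`. -/
noncomputable def stepK (n : ℕ) : (A ⊗[K] TPK A n) →ₗ[K] TPK A (n + 1) :=
  ((PiTensorProduct.reindex K (fun _ : Fin 1 ⊕ Fin n => A)
      (finSumFinEquiv.trans (finCongr (Nat.add_comm 1 n)))).toLinearMap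
    ∘ₗ (PiTensorProduct.tmulEquiv (ι := Fin 1) (ι₂ := Fin n) K A).toLinearMap)
    ∘ₗ (LinearMap.rTensor (TPK A n)
      (PiTensorProduct.subsingletonEquiv (0 : Fin 1) : (⨂[K] (_ : Fin 1), A) ≃ₗ[K] A).symm.toLinearMap)

/-- The iterated coproduct `Δⁿ : A → A^{⊗n}`, with `Δ⁰ := ε` and `Δ^{n+1} := (id ⊗ Δⁿ) ∘ Δ`. -/
noncomputable def DeltaIterK : (n : ℕ) → A →ₗ[K] TPK A n
  | 0 => (PiTensorProduct.isEmptyEquiv (ι := Fin 0)).symm.toLinearMap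
          ∘ₗ (Coalgebra.counit : A →ₗ[K] K)
  | n + 1 => stepK A n ∘ₗ LinearMap.lTensor A (DeltaIterK n)
              ∘ₗ (Coalgebra.comul : A →ₗ[K] A ⊗[K] A)

/-- `δ_n := (id − η∘ε)^{⊗n} ∘ Δⁿ : A → A^{⊗n}`. -/
noncomputable def deltaNK (n : ℕ) : A →ₗ[K] TPK A n :=
  (PiTensorProduct.map fun _ =>
      (LinearMap.id : A →ₗ[K] A) - Algebra.linearMap K A ∘ₗ (Coalgebra.counit : A →ₗ[K] K))
    ∘ₗ DeltaIterK A n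

/-- `I^∨ := Σ_{n≥1} (q−1)^{−n} J^{n−1}·I`. -/
noncomputable def Ivee (H I : Submodule R A) : Submodule R A :=
  ⨆ n : ℕ, ksmul A (((qK - 1)⁻¹) ^ (n + 1)) (((Jform A H) ^ n) * I)

/-- The Drinfeld-type transform `(I^∨)^!`, relative to `H^∨`. -/
noncomputable def IveeShriek (H I : Submodule R A) : Set A :=
  {x | x ∈ Ivee A H I ∧ ∀ n : ℕ,
    ∃ y ∈ ⨆ s : Fin (n + 1),
        tgrpK A (fun i : Fin (n + 1) => if i = s then Ivee A H I else Hvee A H),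
      deltaNK A (n + 1) x = ((qK - 1) ^ (n + 1)) • y}

/-!
The comultiplication of `H` maps `I` into `H ⊗ I + I ⊗ H`, so the iterated coproduct maps it into
the sum over `s` of the tensors with `s`-th factor in `I` and all other factors in `H`. The
projection `id - η ∘ ε` fixes `I` and sends `H` into `J`, hence `δ_n(x)` lies in the same sum with
`J` in place of `H`. Now extract a factor `q - 1` from each of the `n` tensor factors, using
`J ⊆ (q - 1) H^∨` and `I ⊆ (q - 1) I^∨`.
-/

lemma qK_sub_one_ne_zero : qK - 1 ≠ 0 := by
  rw [sub_ne_zero, qK, ← map_one (algebraMap R K), (IsFractionRing.injective R K).ne_iff, q,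
    ← LaurentPolynomial.T_zero]
  intro h
  simpa only [LaurentPolynomial.degree_T, WithBot.coe_inj, one_ne_zero] using
    congrArg LaurentPolynomial.degree h

section

variable {B : Type*} [Ring B] [HopfAlgebra K B]

lemma stepK_tprod (n : ℕ) (a : B) (f : Fin n → B) :
    stepK B n (a ⊗ₜ[K] tprod K f) = tprod K (Fin.cons a f : Fin (n + 1) → B) := by
  let e : Fin 1 ⊕ Fin n ≃ Fin (n + 1) := finSumFinEquiv.trans (finCongr (Nat.add_comm 1 n))
  have e_symm_zero : e.symm 0 = Sum.inl 0 := by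
    rw [Equiv.symm_apply_eq]; ext; simp [e]
  have e_symm_succ (j : Fin n) : e.symm j.succ = Sum.inr j := by
    rw [Equiv.symm_apply_eq]; ext; simp [e]
  have step_eq : stepK B n (a ⊗ₜ[K] tprod K f) =
      tprod K fun i => Sum.elim (fun _ => a) f (e.symm i) := by
    simp only [stepK, LinearMap.comp_apply, LinearMap.rTensor_tmul, LinearEquiv.coe_coe,
      subsingletonEquiv_symm_apply']
    erw [tmulEquiv_apply, reindex_tprod]
  rw [step_eq]
  congr 1
  funext i
  cases i using Fin.cases with
  | zero => simp [e_symm_zero]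
  | succ j => simp [e_symm_succ]

lemma DeltaIterK_succ_apply (n : ℕ) (x : B) :
    DeltaIterK B (n + 1) x =
      stepK B n (LinearMap.lTensor B (DeltaIterK B n) (Coalgebra.comul (R := K) x)) :=
  rfl

lemma DeltaIterK_one_apply (x : B) : DeltaIterK B 1 x = tprod K fun _ => x := by
  rw [DeltaIterK_succ_apply, DeltaIterK, LinearMap.lTensor_comp_apply,
    Coalgebra.lTensor_counit_comul, LinearMap.lTensor_tmul]
  have isEmptyEquiv_symm_one :
      (isEmptyEquiv (Fin 0)).symm (1 : K) = tprod K (Fin.elim0 : Fin 0 → B) := by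
    rw [LinearEquiv.symm_apply_eq, isEmptyEquiv_apply_tprod]
  rw [LinearEquiv.coe_coe, isEmptyEquiv_symm_one, stepK_tprod]
  congr 1
  funext i
  rw [Fin.fin_one_eq_zero i, Fin.cons_zero]

/-- The projection `id - η ∘ ε` of a Hopf algebra onto its augmentation ideal, whose tensor powers
enter the definition of `δ_n`. -/
noncomputable def augProj : B →ₗ[K] B :=
  LinearMap.id - Algebra.linearMap K B ∘ₗ Coalgebra.counit

lemma augProj_apply (x : B) :
    augProj x = x - algebraMap K B (Coalgebra.counit (R := K) x) :=
  rfl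

lemma augProj_eq_self {x : B} (hx : Coalgebra.counit (R := K) x = 0) : augProj x = x := by
  rw [augProj_apply, hx, map_zero, sub_zero]

lemma counit_augProj (x : B) : Coalgebra.counit (R := K) (augProj x) = 0 := by
  rw [augProj_apply, map_sub, Bialgebra.counit_algebraMap, sub_self]

lemma deltaNK_apply (n : ℕ) (x : B) :
    deltaNK B n x = PiTensorProduct.map (fun _ => augProj) (DeltaIterK B n x) :=
  rfl

variable [Algebra R B] {n : ℕ} {H I P Q P' Q' : Submodule R B}

lemma apply_mem_of_mem_tsubK {M F : Type*} [AddGroup M] [FunLike F (B ⊗[K] B) M]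
    [AddMonoidHomClass F (B ⊗[K] B) M] (f : F) {G : AddSubgroup M}
    (hf : ∀ a ∈ P, ∀ b ∈ Q, f (a ⊗ₜ b) ∈ G) {z : B ⊗[K] B} (hz : z ∈ tsubK B P Q) : f z ∈ G := by
  suffices tsubK B P Q ≤ G.comap (f : B ⊗[K] B →+ M) from this hz
  refine (AddSubgroup.closure_le _).2 ?_
  rintro _ ⟨a, ha, b, hb, rfl⟩
  exact hf a ha b hb

lemma apply_mem_of_mem_tgrpK {M F : Type*} [AddGroup M] [FunLike F (TPK B n) M]
    [AddMonoidHomClass F (TPK B n) M] (f : F) {G : AddSubgroup M} {p : Fin n → Submodule R B}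
    (hf : ∀ a : Fin n → B, (∀ i, a i ∈ p i) → f (tprod K a) ∈ G) {z : TPK B n}
    (hz : z ∈ tgrpK B p) : f z ∈ G := by
  suffices tgrpK B p ≤ G.comap (f : TPK B n →+ M) from this hz
  refine (AddSubgroup.closure_le _).2 ?_
  rintro _ ⟨a, ha, rfl⟩
  exact hf a ha

lemma tprod_mem_tgrpK {p : Fin n → Submodule R B} {a : Fin n → B} (ha : ∀ i, a i ∈ p i) :
    tprod K a ∈ tgrpK B p :=
  AddSubgroup.subset_closure ⟨a, ha, rfl⟩

lemma map_mem_tgrpK {p p' : Fin n → Submodule R B} {φ : Fin n → B →ₗ[K] B}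
    (hφ : ∀ i, ∀ a ∈ p i, φ i a ∈ p' i) {z : TPK B n} (hz : z ∈ tgrpK B p) :
    PiTensorProduct.map φ z ∈ tgrpK B p' := by
  refine apply_mem_of_mem_tgrpK (PiTensorProduct.map φ) (fun a ha => ?_) hz
  rw [map_tprod]
  exact tprod_mem_tgrpK fun i => hφ i _ (ha i)

lemma stepK_tmul_mem_tgrpK {p : Fin (n + 1) → Submodule R B} {a : B} (ha : a ∈ p 0)
    {z : TPK B n} (hz : z ∈ tgrpK B fun i => p i.succ) :
    stepK B n (a ⊗ₜ z) ∈ tgrpK B p := by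
  refine apply_mem_of_mem_tgrpK (stepK B n ∘ₗ TensorProduct.mk K B (TPK B n) a)
    (fun b hb => ?_) hz
  rw [LinearMap.comp_apply, TensorProduct.mk_apply, stepK_tprod]
  exact tprod_mem_tgrpK (Fin.cases ha hb)

variable (P Q n) in
/-- The sum `Σ_s P^{⊗(s-1)} ⊗ Q ⊗ P^{⊗(n-s)}` inside `B^{⊗n}`, for `s` running from `1` to `n`:
one tensor factor, in any position, lies in `Q`, and the others lie in `P`. It is the zero subgroup
for `n = 0`. -/
noncomputable def mixedTensor : AddSubgroup (TPK B n) :=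
  ⨆ s : Fin n, tgrpK B fun i => if i = s then Q else P

lemma tgrpK_le_mixedTensor (s : Fin n) :
    (tgrpK B fun i => if i = s then Q else P) ≤ mixedTensor n P Q :=
  le_iSup (fun s : Fin n => tgrpK B fun i => if i = s then Q else P) s

lemma apply_mem_of_mem_mixedTensor {M F : Type*} [AddGroup M] [FunLike F (TPK B n) M]
    [AddMonoidHomClass F (TPK B n) M] (f : F) {G : AddSubgroup M}
    (hf : ∀ s : Fin n, ∀ z ∈ tgrpK B (fun i => if i = s then Q else P), f z ∈ G) {z : TPK B n}
    (hz : z ∈ mixedTensor n P Q) : f z ∈ G := by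
  suffices mixedTensor n P Q ≤ G.comap (f : TPK B n →+ M) from this hz
  exact iSup_le hf

lemma map_mem_mixedTensor {φ : B →ₗ[K] B} (hP : ∀ a ∈ P, φ a ∈ P') (hQ : ∀ a ∈ Q, φ a ∈ Q')
    {z : TPK B n} (hz : z ∈ mixedTensor n P Q) :
    PiTensorProduct.map (fun _ => φ) z ∈ mixedTensor n P' Q' := by
  refine apply_mem_of_mem_mixedTensor (PiTensorProduct.map fun _ => φ) (fun s w hw =>
    tgrpK_le_mixedTensor s (map_mem_tgrpK (fun i a ha => ?_) hw)) hz
  split_ifs at ha ⊢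
  exacts [hQ a ha, hP a ha]

lemma stepK_tmul_mem_mixedTensor {a : B} (ha : a ∈ P) {z : TPK B n}
    (hz : z ∈ mixedTensor n P Q) : stepK B n (a ⊗ₜ z) ∈ mixedTensor (n + 1) P Q := by
  refine apply_mem_of_mem_mixedTensor (stepK B n ∘ₗ TensorProduct.mk K B (TPK B n) a)
    (fun s w hw => tgrpK_le_mixedTensor s.succ (stepK_tmul_mem_tgrpK ?_ ?_)) hz
  · rwa [if_neg (Fin.succ_ne_zero s).symm]
  · simpa only [Fin.succ_inj] using hw

lemma stepK_tmul_mem_mixedTensor_of_tgrpK {a : B} (ha : a ∈ Q) {z : TPK B n}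
    (hz : z ∈ tgrpK B fun _ => P) : stepK B n (a ⊗ₜ z) ∈ mixedTensor (n + 1) P Q := by
  refine tgrpK_le_mixedTensor 0 (stepK_tmul_mem_tgrpK ?_ ?_)
  · rwa [if_pos rfl]
  · simpa only [Fin.succ_ne_zero, if_false] using hz

lemma stepK_lTensor_mem_of_mem_tsubK {φ : B →ₗ[K] TPK B n} {G : AddSubgroup (TPK B (n + 1))}
    (hφ : ∀ a ∈ P, ∀ b ∈ Q, stepK B n (a ⊗ₜ φ b) ∈ G) {z : B ⊗[K] B} (hz : z ∈ tsubK B P Q) :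
    stepK B n (LinearMap.lTensor B φ z) ∈ G := by
  refine apply_mem_of_mem_tsubK (stepK B n ∘ₗ LinearMap.lTensor B φ) (fun a ha b hb => ?_) hz
  rw [LinearMap.comp_apply, LinearMap.lTensor_tmul]
  exact hφ a ha b hb

/- Only positive tensor powers: `Δ⁰ = ε` takes values in `ℂ[q,q⁻¹]` on `H`, whereas the subgroup
`tgrpK` of `B^{⊗0} = ℂ(q)` generated by the empty tensor is `ℤ`. -/
lemma DeltaIterK_succ_mem_tgrpK (hH : ∀ x ∈ H, Coalgebra.comul (R := K) x ∈ tsubK B H H)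
    (n : ℕ) {x : B} (hx : x ∈ H) : DeltaIterK B (n + 1) x ∈ tgrpK B fun _ => H := by
  induction n generalizing x with
  | zero =>
    rw [DeltaIterK_one_apply]
    exact tprod_mem_tgrpK fun _ => hx
  | succ n ih =>
    rw [DeltaIterK_succ_apply]
    refine stepK_lTensor_mem_of_mem_tsubK (fun a ha b hb => ?_) (hH x hx)
    exact stepK_tmul_mem_tgrpK (p := fun _ => H) ha (ih hb)

lemma DeltaIterK_succ_mem_mixedTensor (hH : ∀ x ∈ H, Coalgebra.comul (R := K) x ∈ tsubK B H H)
    (hI : ∀ x ∈ I, Coalgebra.comul (R := K) x ∈ tsubK B H I ⊔ tsubK B I H)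
    (n : ℕ) {x : B} (hx : x ∈ I) : DeltaIterK B (n + 1) x ∈ mixedTensor (n + 1) H I := by
  induction n generalizing x with
  | zero =>
    rw [DeltaIterK_one_apply]
    refine tgrpK_le_mixedTensor 0 (tprod_mem_tgrpK fun i => ?_)
    rwa [if_pos (Fin.fin_one_eq_zero i)]
  | succ n ih =>
    obtain ⟨u, hu, v, hv, huv⟩ := AddSubgroup.mem_sup.1 (hI x hx)
    rw [DeltaIterK_succ_apply, ← huv, map_add, map_add]
    refine add_mem (stepK_lTensor_mem_of_mem_tsubK (fun a ha b hb => ?_) hu)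
      (stepK_lTensor_mem_of_mem_tsubK (fun a ha b hb => ?_) hv)
    · exact stepK_tmul_mem_mixedTensor ha (ih hb)
    · exact stepK_tmul_mem_mixedTensor_of_tgrpK ha (DeltaIterK_succ_mem_tgrpK hH n hb)

lemma smul_mem_ksmul (c : K) {x : B} (hx : x ∈ P) : c • x ∈ ksmul B c P :=
  Submodule.subset_span ⟨x, hx, rfl⟩

variable [IsScalarTower R K B]

lemma inv_smul_mem_Ivee {x : B} (hx : x ∈ I) : (qK - 1)⁻¹ • x ∈ Ivee B H I := by
  refine Submodule.mem_iSup_of_mem 0 ?_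
  rw [zero_add, pow_one, pow_zero, one_mul]
  exact smul_mem_ksmul _ hx

lemma inv_smul_mem_Hvee {x : B} (hx : x ∈ Jform B H) : (qK - 1)⁻¹ • x ∈ Hvee B H := by
  refine Submodule.mem_iSup_of_mem 1 ?_
  rw [pow_one, pow_one]
  exact smul_mem_ksmul _ hx

lemma exists_eq_pow_smul_of_mem_mixedTensor {z : TPK B n}
    (hz : z ∈ mixedTensor n (Jform B H) I) :
    ∃ y ∈ mixedTensor n (Hvee B H) (Ivee B H I), z = (qK - 1) ^ n • y := by
  let scale (c : K) : TPK B n →ₗ[K] TPK B n := PiTensorProduct.map fun _ => c • LinearMap.id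
  have scale_eq (c : K) : scale c = c ^ n • LinearMap.id := by
    simpa [scale] using (mapMultilinear K (fun _ : Fin n => B) fun _ => B).map_smul_univ
      (fun _ => c) fun _ => LinearMap.id
  refine ⟨scale (qK - 1)⁻¹ z,
    map_mem_mixedTensor (fun _ => inv_smul_mem_Hvee) (fun _ => inv_smul_mem_Ivee) hz, ?_⟩
  rw [scale_eq, LinearMap.smul_apply, LinearMap.id_apply, inv_pow,
    smul_inv_smul₀ (pow_ne_zero n qK_sub_one_ne_zero)]

lemma le_Ivee : I ≤ Ivee B H I := by
  intro x hx
  have eq_smul : x = (q - 1) • (qK - 1)⁻¹ • x := by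
    rw [← algebraMap_smul K (q - 1), map_sub, map_one, ← qK, smul_inv_smul₀ qK_sub_one_ne_zero]
  rw [eq_smul]
  exact Submodule.smul_mem _ _ (inv_smul_mem_Ivee hx)

lemma augProj_mem_Jform (one_mem : (1 : B) ∈ H)
    (counit_mem : ∀ x ∈ H, ∃ r : R, Coalgebra.counit (R := K) x = algebraMap R K r)
    {x : B} (hx : x ∈ H) : augProj x ∈ Jform B H := by
  refine ⟨?_, counit_augProj x⟩
  obtain ⟨r, hr⟩ := counit_mem x hx
  rw [augProj_apply, hr, Algebra.algebraMap_eq_smul_one, algebraMap_smul]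
  exact H.sub_mem hx (H.smul_mem r one_mem)

lemma deltaNK_succ_mem_mixedTensor (one_mem : (1 : B) ∈ H)
    (comul_mem : ∀ x ∈ H, Coalgebra.comul (R := K) x ∈ tsubK B H H)
    (counit_mem : ∀ x ∈ H, ∃ r : R, Coalgebra.counit (R := K) x = algebraMap R K r)
    (hcoideal : ∀ x ∈ I, Coalgebra.comul (R := K) x ∈ tsubK B H I ⊔ tsubK B I H)
    (hcounit : ∀ x ∈ I, Coalgebra.counit (R := K) x = 0) (n : ℕ) {x : B} (hx : x ∈ I) :
    deltaNK B (n + 1) x ∈ mixedTensor (n + 1) (Jform B H) I := by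
  rw [deltaNK_apply]
  refine map_mem_mixedTensor (fun a ha => augProj_mem_Jform one_mem counit_mem ha)
    (fun a ha => ?_) (DeltaIterK_succ_mem_mixedTensor comul_mem hcoideal n hx)
  rwa [augProj_eq_self (hcounit a ha)]

theorem I_subset_IveeShriek_general (one_mem : (1 : B) ∈ H)
    (comul_mem : ∀ x ∈ H, Coalgebra.comul (R := K) x ∈ tsubK B H H)
    (counit_mem : ∀ x ∈ H, ∃ r : R, Coalgebra.counit (R := K) x = algebraMap R K r)
    (hcoideal : ∀ x ∈ I, Coalgebra.comul (R := K) x ∈ tsubK B H I ⊔ tsubK B I H)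
    (hcounit : ∀ x ∈ I, Coalgebra.counit (R := K) x = 0) :
    ∀ x ∈ I, x ∈ IveeShriek B H I := fun _ hx =>
  ⟨le_Ivee hx, fun n => exists_eq_pow_smul_of_mem_mixedTensor
    (deltaNK_succ_mem_mixedTensor one_mem comul_mem counit_mem hcoideal hcounit n hx)⟩

end

/-- `I_q ⊆ (I_q^∨)^!`. -/
theorem I_subset_IveeShriek (H I : Submodule R A) (hH : IsHopfForm A H)
    (hIH : I ≤ H)
    (hIdeal : ∀ h ∈ H, ∀ x ∈ I, h * x ∈ I)
    (hcoideal : ∀ x ∈ I, Coalgebra.comul (R := K) x ∈ tsubK A H I ⊔ tsubK A I H)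
    (hcounit : ∀ x ∈ I, Coalgebra.counit (R := K) x = 0) :
    ∀ x ∈ I, x ∈ IveeShriek A H I :=
  I_subset_IveeShriek_general hH.one_mem hH.comul_mem hH.counit_mem hcoideal hcounit

end GQDP
end
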